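/- If H is a 4-uniform hypergraph, then the Staller-start game transversal number satisfies τ_g'(H) ≤ (1/252)(71 n(H) + 71 m(H) + 110). -/

import Mathlib

variable {V : Type} [Fintype V] [DecidableEq V]

/-- The set of legal moves in the transversal game with uncovered edge set `E`:
the vertices hitting at least one uncovered edge. -/
def playable (E : Finset (Finset V)) : Finset V :=
  Finset.univ.filter (fun v => ∃ e ∈ E, v ∈ e)

/-- The number of moves remaining in the transversal game with uncovered edge set `E`
under optimal play, where `ehTurn = true` iff Edge-hitter (the minimizer) moves next;
Staller (the maximizer) moves next iff `ehTurn = false`.  Each move must hit at least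
one uncovered edge, and the game ends when no uncovered edge remains. -/
def gameVal (ehTurn : Bool) (E : Finset (Finset V)) : ℕ :=
  if h : (playable E).Nonempty then
    1 +
      (if ehTurn then
        (playable E).attach.inf' (Finset.attach_nonempty_iff.mpr h)
          (fun v => gameVal (!ehTurn) (E.filter (fun e => v.1 ∉ e)))
      else
        (playable E).attach.sup' (Finset.attach_nonempty_iff.mpr h)
          (fun v => gameVal (!ehTurn) (E.filter (fun e => v.1 ∉ e))))
  else 0
termination_by E.card
decreasing_by
  all_goals
    obtain ⟨v, hv⟩ := v
    simp only [playable, Finset.mem_filter, Finset.mem_univ, true_and] at hv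
    obtain ⟨e, he, hve⟩ := hv
    exact Finset.card_lt_card (Finset.filter_ssubset.mpr ⟨e, he, by simp [hve]⟩)

/-- The game transversal number `τ_g`: Edge-hitter makes the first move. -/
def gameTransversalNum (E : Finset (Finset V)) : ℕ := gameVal true E

/-- The Staller-start game transversal number `τ_g'`: Staller makes the first move. -/
def stallerGameTransversalNum (E : Finset (Finset V)) : ℕ := gameVal false E

/-- The transversal number `τ`: the minimum size of a set of vertices meeting all edges. -/
noncomputable def transversalNum (E : Finset (Finset V)) : ℕ :=
  sInf {n | ∃ T : Finset V, (∀ e ∈ E, ∃ v ∈ T, v ∈ e) ∧ T.card = n}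

/-!
Write `n` and `m` for the numbers of unisolated vertices and of edges of the current position, and
`n₂` for its number of vertices of degree two. Every move lowers `n` and `m` by at least one, so
while there is a vertex of degree greater than `k`, Edge-hitter plays it and a round lowers
`a * n + b * m` by at least `2 * a + (k + 2) * b`. The weights `(a, b)` change as the maximum degree
drops to four, three and two; the double counts `4 * m ≤ k * n` for `k = 4, 3` and `4 * m ≤ n + n₂`
for `k = 2` pay for the changes of weights.

At maximum degree two the potential is `9 * m - n₂`, of which a round should use up at least `18`.
Edge-hitter plays a vertex of degree two that destroys as few degree-two vertices as possible, at
most seven. If Staller answers with another vertex of degree two, four edges are covered and at most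
fourteen degree-two vertices destroyed, which is ample. If Staller's vertex covers a single edge, at
most `7 + 3` degree-two vertices are set against `27`, so the round may fall one unit short. The
remedy is to claim one unit more for positions in which Edge-hitter has a degree-two vertex
destroying at most six: a counting argument around the three covered edges shows that the position
after a round destroying at least `6 + 3` is again of this kind, so the extra unit claimed for it
covers what the round lacks.
-/

namespace TransversalGame

open Finset

section Hypergraph

variable {α : Type*} [DecidableEq α] {E F : Finset (Finset α)} {a b e f : Finset α} {v w x : α}
  {k r : ℕ}

/-- The uncovered edges that remain when `v` is played. -/
def residual (E : Finset (Finset α)) (v : α) : Finset (Finset α) := {e ∈ E | v ∉ e}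

/-- The star of the vertex `v`; the degree of `v` is written `#(edgesAt E v)`. -/
def edgesAt (E : Finset (Finset α)) (v : α) : Finset (Finset α) := {e ∈ E | v ∈ e}

/-- Every vertex of the hypergraph `E` has degree at most `k`. -/
def MaxDegreeLE (E : Finset (Finset α)) (k : ℕ) : Prop := ∀ x, #(edgesAt E x) ≤ k

/-- The set of vertices of degree two, whose size is tracked by the potential `9 * #E - n₂`. -/
def degreeTwo (E : Finset (Finset α)) : Finset α := {x ∈ E.biUnion id | #(edgesAt E x) = 2}

/-- The number of degree-two vertices on the edges that the move `v` covers. When the maximum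
degree is two, these are the degree-two vertices which the move destroys. -/
def loss (E : Finset (Finset α)) (v : α) : ℕ := #(degreeTwo E ∩ (edgesAt E v).biUnion id)

@[simp]
theorem mem_residual : e ∈ residual E v ↔ e ∈ E ∧ v ∉ e := mem_filter

@[simp]
theorem mem_edgesAt : e ∈ edgesAt E v ↔ e ∈ E ∧ v ∈ e := mem_filter

theorem edgesAt_nonempty : (edgesAt E v).Nonempty ↔ v ∈ E.biUnion id := by
  simp [Finset.Nonempty]

theorem mem_degreeTwo : x ∈ degreeTwo E ↔ #(edgesAt E x) = 2 := by
  rw [degreeTwo, mem_filter, and_iff_right_iff_imp, ← edgesAt_nonempty, ← card_pos]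
  lia

theorem residual_subset (E : Finset (Finset α)) (v : α) : residual E v ⊆ E := filter_subset _ _

theorem card_residual_add_card_edgesAt (E : Finset (Finset α)) (v : α) :
    #(residual E v) + #(edgesAt E v) = #E := by
  rw [add_comm]
  exact card_filter_add_card_filter_not _

theorem residual_ssubset (hv : v ∈ E.biUnion id) : residual E v ⊂ E := by
  obtain ⟨e, he⟩ := edgesAt_nonempty.2 hv
  exact filter_ssubset.2 ⟨e, (mem_edgesAt.1 he).1, not_not.2 (mem_edgesAt.1 he).2⟩

theorem biUnion_residual_ssubset (hv : v ∈ E.biUnion id) :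
    (residual E v).biUnion id ⊂ E.biUnion id :=
  ssubset_iff_of_subset (biUnion_subset_biUnion_of_subset_left _ (residual_subset E v)) |>.2
    ⟨v, hv, by simp⟩

theorem MaxDegreeLE.mono (hF : MaxDegreeLE F k) (hEF : E ⊆ F) : MaxDegreeLE E k := fun x =>
  (card_le_card (filter_subset_filter _ hEF)).trans (hF x)

theorem sum_card_edgesAt (E : Finset (Finset α)) :
    ∑ x ∈ E.biUnion id, #(edgesAt E x) = ∑ e ∈ E, #e := by
  refine (sum_card_bipartiteAbove_eq_sum_card_bipartiteBelow (· ∈ ·)).trans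
    (sum_congr rfl fun e he => ?_)
  rw [bipartiteBelow, filter_mem_eq_inter]
  exact congrArg card (inter_eq_right.2 (subset_biUnion_of_mem id he))

theorem mul_card_le_of_maxDegreeLE (hE : (E : Set (Finset α)).Sized r) (hk : MaxDegreeLE E k) :
    r * #E ≤ k * #(E.biUnion id) := by
  calc r * #E = ∑ x ∈ E.biUnion id, #(edgesAt E x) := by
        rw [sum_card_edgesAt, sum_const_nat fun e he => hE (mem_coe.2 he), mul_comm]
    _ ≤ k * #(E.biUnion id) := by
        simpa [mul_comm] using sum_le_card_nsmul (E.biUnion id) _ k fun x _ => hk x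

theorem mul_card_le_add_card_degreeTwo (hE : (E : Set (Finset α)).Sized r)
    (h2 : MaxDegreeLE E 2) : r * #E ≤ #(E.biUnion id) + #(degreeTwo E) := by
  calc r * #E = ∑ x ∈ E.biUnion id, #(edgesAt E x) := by
        rw [sum_card_edgesAt, sum_const_nat fun e he => hE (mem_coe.2 he), mul_comm]
    _ ≤ ∑ x ∈ E.biUnion id, (1 + if #(edgesAt E x) = 2 then 1 else 0) :=
        sum_le_sum fun x _ => by have := h2 x; split_ifs <;> lia
    _ = #(E.biUnion id) + #(degreeTwo E) := by
        rw [sum_add_distrib, ← card_eq_sum_ones, ← card_filter, degreeTwo]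

/-! ### Hypergraphs of maximum degree two -/

theorem edgesAt_eq_pair (h2 : MaxDegreeLE E 2) (he : e ∈ E) (hf : f ∈ E) (hef : e ≠ f)
    (hxe : x ∈ e) (hxf : x ∈ f) : edgesAt E x = {e, f} := by
  refine (eq_of_subset_of_card_le ?_ ((h2 x).trans_eq (card_pair hef).symm)).symm
  simp [insert_subset_iff, *]

theorem mem_degreeTwo_of_mem_of_mem (h2 : MaxDegreeLE E 2) (he : e ∈ E) (hf : f ∈ E)
    (hef : e ≠ f) (hxe : x ∈ e) (hxf : x ∈ f) : x ∈ degreeTwo E := by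
  rw [mem_degreeTwo, edgesAt_eq_pair h2 he hf hef hxe hxf, card_pair hef]

theorem exists_edgesAt_eq_pair_of_mem (hx : x ∈ degreeTwo E) (he : e ∈ E) (hxe : x ∈ e) :
    ∃ f, f ≠ e ∧ edgesAt E x = {e, f} := by
  obtain ⟨f, hf⟩ := card_eq_one.1 <|
    (card_erase_of_mem (mem_edgesAt.2 ⟨he, hxe⟩)).trans (by rw [mem_degreeTwo.1 hx])
  have hfe : f ∈ (edgesAt E x).erase e := by simp [hf]
  exact ⟨f, ne_of_mem_erase hfe, by rw [← hf, insert_erase (mem_edgesAt.2 ⟨he, hxe⟩)]⟩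

theorem degreeTwo_residual (h2 : MaxDegreeLE E 2) (v : α) :
    degreeTwo (residual E v) = degreeTwo E \ (edgesAt E v).biUnion id := by
  ext x
  have hstar : edgesAt (residual E v) x = edgesAt E x \ edgesAt E v := by
    ext e
    simp only [mem_edgesAt, mem_residual, mem_sdiff]
    tauto
  have hsplit := card_sdiff_add_card_inter (edgesAt E x) (edgesAt E v)
  have hx := h2 x
  have hinter : x ∈ (edgesAt E v).biUnion id ↔ 0 < #(edgesAt E x ∩ edgesAt E v) := by
    simp only [mem_biUnion, card_pos, Finset.Nonempty, mem_inter, mem_edgesAt, id]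
    tauto
  rw [mem_sdiff, mem_degreeTwo, mem_degreeTwo, hinter, hstar]
  lia

theorem card_degreeTwo_residual_add_loss (h2 : MaxDegreeLE E 2) (v : α) :
    #(degreeTwo (residual E v)) + loss E v = #(degreeTwo E) := by
  rw [degreeTwo_residual h2, loss, card_sdiff_add_card_inter]

theorem loss_of_edgesAt_eq_pair (hv : edgesAt E v = {a, b}) :
    loss E v = #(degreeTwo E ∩ (a ∪ b)) := by
  simp [loss, hv]

theorem loss_of_edgesAt_eq_singleton (hv : edgesAt E v = {f}) :
    loss E v = #(degreeTwo E ∩ f) := by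
  simp [loss, hv]

theorem degreeTwo_inter_subset_erase (hv : edgesAt E v = {f}) :
    degreeTwo E ∩ f ⊆ f.erase v := by
  intro x hx
  refine mem_erase.2 ⟨?_, (mem_inter.1 hx).2⟩
  rintro rfl
  have := mem_degreeTwo.1 (mem_inter.1 hx).1
  simp [hv] at this

theorem loss_add_one_le_of_degree_one (hE : (E : Set (Finset α)).Sized r)
    (hv : #(edgesAt E v) = 1) : loss E v + 1 ≤ r := by
  obtain ⟨f, hf⟩ := card_eq_one.1 hv
  obtain ⟨hfE, hvf⟩ := mem_edgesAt.1 (hf ▸ mem_singleton_self f)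
  rw [loss_of_edgesAt_eq_singleton hf, ← hE hfE, ← card_erase_add_one hvf]
  exact Nat.succ_le_succ (card_le_card (degreeTwo_inter_subset_erase hf))

theorem loss_add_one_le_of_degree_two (hE : (E : Set (Finset α)).Sized r)
    (hv : #(edgesAt E v) = 2) : loss E v + 1 ≤ 2 * r := by
  obtain ⟨a, b, -, hab⟩ := card_eq_two.1 hv
  obtain ⟨haE, hva⟩ := mem_edgesAt.1 (hab ▸ mem_insert_self a {b})
  obtain ⟨hbE, hvb⟩ := mem_edgesAt.1 (hab ▸ mem_insert_of_mem (mem_singleton_self b))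
  have hinter : 0 < #(a ∩ b) := card_pos.2 ⟨v, mem_inter.2 ⟨hva, hvb⟩⟩
  have hunion := card_union_add_card_inter a b
  have hloss : loss E v ≤ #(a ∪ b) :=
    loss_of_edgesAt_eq_pair hab ▸ card_le_card inter_subset_right
  rw [hE haE, hE hbE] at hunion
  lia

theorem add_card_inter_le_of_le_loss (h2 : MaxDegreeLE E 2) (hk : ∀ x ∈ degreeTwo E, k ≤ loss E x)
    (he : e ∈ E) (hf : f ∈ E) (hef : e ≠ f) (hne : (e ∩ f).Nonempty) :
    k + #(e ∩ f) ≤ #(degreeTwo E ∩ e) + #(degreeTwo E ∩ f) := by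
  obtain ⟨x, hx⟩ := hne
  obtain ⟨hxe, hxf⟩ := mem_inter.1 hx
  have hkx : k ≤ #(degreeTwo E ∩ (e ∪ f)) :=
    loss_of_edgesAt_eq_pair (edgesAt_eq_pair h2 he hf hef hxe hxf) ▸
      hk x (mem_degreeTwo_of_mem_of_mem h2 he hf hef hxe hxf)
  have hsub : e ∩ f ⊆ (degreeTwo E ∩ e) ∩ (degreeTwo E ∩ f) := by
    rw [← inter_inter_distrib_left]
    exact subset_inter (fun y hy => mem_degreeTwo_of_mem_of_mem h2 he hf hef
      (mem_inter.1 hy).1 (mem_inter.1 hy).2) Subset.rfl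
  rw [← card_union_add_card_inter, ← inter_union_distrib_left]
  exact add_le_add hkx (card_le_card hsub)

theorem sum_card_inter_union_add_le (h2 : MaxDegreeLE E 2) (ha : a ∈ E) (hb : b ∈ E)
    (hab : a ≠ b) (hF : F ⊆ E) (haF : a ∉ F) (hbF : b ∉ F) :
    ∑ e ∈ F, #(e ∩ (a ∪ b)) + #(a ∩ b) ≤ #(degreeTwo E ∩ (a ∪ b)) := by
  set S := degreeTwo E ∩ (a ∪ b)
  have hmem : ∀ e ∈ E, ∀ f ∈ E, e ≠ f → e ∩ f ⊆ degreeTwo E := fun e he f hf hef x hx =>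
    mem_degreeTwo_of_mem_of_mem h2 he hf hef (mem_inter.1 hx).1 (mem_inter.1 hx).2
  have hinter : ∀ e ∈ F, e ∩ (a ∪ b) ⊆ S ∩ e := fun e he => by
    have hea := hmem e (hF he) a ha (ne_of_mem_of_not_mem he haF)
    have heb := hmem e (hF he) b hb (ne_of_mem_of_not_mem he hbF)
    refine subset_inter (subset_inter ?_ inter_subset_right) inter_subset_left
    exact inter_union_distrib_left e a b ▸ union_subset hea heb
  have hcount : ∑ e ∈ insert a (insert b F), #(S ∩ e) ≤ #S * 2 :=
    sum_card_inter_le fun x _ => (card_le_card <| filter_subset_filter _ <|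
      insert_subset ha <| insert_subset hb hF).trans (h2 x)
  rw [sum_insert (by simp [hab, haF]), sum_insert hbF] at hcount
  have hsplit : #(S ∩ a) + #(S ∩ b) = #S + #(S ∩ (a ∩ b)) := by
    rw [← card_union_add_card_inter, ← inter_union_distrib_left, ← inter_inter_distrib_left,
      inter_eq_left.2 inter_subset_right]
  have hab_subset : a ∩ b ⊆ S ∩ (a ∩ b) :=
    subset_inter (subset_inter (hmem a ha b hb hab)
      (inter_subset_left.trans subset_union_left)) Subset.rfl
  have hsum := sum_le_sum fun e he => card_le_card (hinter e he)
  have hab_card := card_le_card hab_subset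
  lia

/-! ### Tight configurations -/

/-- The edges other than `a`, `b` and `f` that meet `f`. -/
def crossEdges (E : Finset (Finset α)) (a b f : Finset α) : Finset (Finset α) :=
  {e ∈ E | e ≠ a ∧ e ≠ b ∧ e ≠ f ∧ (e ∩ f).Nonempty}

theorem mem_crossEdges {c : Finset α} :
    c ∈ crossEdges E a b f ↔ c ∈ E ∧ c ≠ a ∧ c ≠ b ∧ c ≠ f ∧ (c ∩ f).Nonempty := mem_filter

/-- The critical position of the degree-two phase: Edge-hitter covers the two edges `a` and `b`,
and Staller replies with a vertex `w` of `f` that covers no further edge but lowers the degree of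
all other vertices of `f`. The last field expresses that Edge-hitter then finds no vertex of small
loss. The vertex played by Edge-hitter enters only through `inter_nonempty`. -/
structure TightConfiguration (E : Finset (Finset α)) (a b f : Finset α) (w : α) : Prop where
  left_mem : a ∈ E
  right_mem : b ∈ E
  reply_mem : f ∈ E
  left_ne_right : a ≠ b
  reply_ne_left : f ≠ a
  reply_ne_right : f ≠ b
  inter_nonempty : (a ∩ b).Nonempty
  mem_reply : w ∈ f
  edgesAt_subset : edgesAt E w ⊆ {a, b, f}
  erase_subset : f.erase w ⊆ degreeTwo E \ (a ∪ b)
  degreeTwo_inter_subset : ∀ e ∈ crossEdges E a b f, degreeTwo E ∩ e ⊆ a ∪ b ∪ f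

namespace TightConfiguration

variable (h : TightConfiguration E a b f w)

include h

theorem inter_reply_eq (he : e ∈ crossEdges E a b f) : e ∩ f = f.erase w ∩ e := by
  obtain ⟨heE, hea, heb, hef, -⟩ := mem_crossEdges.1 he
  have hwe : w ∉ e := fun hwe => by
    simpa [hea, heb, hef] using h.edgesAt_subset (mem_edgesAt.2 ⟨heE, hwe⟩)
  rw [inter_comm, erase_inter, erase_eq_of_notMem fun hw => hwe (mem_inter.1 hw).2]

theorem sum_card_inter_reply : ∑ e ∈ crossEdges E a b f, #(e ∩ f) + 1 = #f := by
  have hone : ∀ x ∈ f.erase w, #{e ∈ crossEdges E a b f | x ∈ e} = 1 := by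
    intro x hx
    obtain ⟨hx2, hxab⟩ := mem_sdiff.1 (h.erase_subset hx)
    have hxf := mem_of_mem_erase hx
    have hcross : {e ∈ crossEdges E a b f | x ∈ e} = (edgesAt E x).erase f := by
      ext e
      have hxa : x ∉ a := fun hxa => hxab (mem_union_left b hxa)
      have hxb : x ∉ b := fun hxb => hxab (mem_union_right a hxb)
      have hmeet : x ∈ e → (e ∩ f).Nonempty := fun hxe => ⟨x, mem_inter.2 ⟨hxe, hxf⟩⟩
      have hea : x ∈ e → e ≠ a := by rintro hxe rfl; exact hxa hxe
      have heb : x ∈ e → e ≠ b := by rintro hxe rfl; exact hxb hxe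
      rw [mem_filter, mem_crossEdges, mem_erase, mem_edgesAt]
      tauto
    rw [hcross, card_erase_of_mem (mem_edgesAt.2 ⟨h.reply_mem, hxf⟩), mem_degreeTwo.1 hx2]
  rw [sum_congr rfl fun e he => congrArg card (h.inter_reply_eq he), sum_card_inter hone, mul_one,
    card_erase_add_one h.mem_reply]

theorem reply_inter_union_subset : f ∩ (a ∪ b) ⊆ {w} := by
  intro x hx
  obtain ⟨hxf, hxab⟩ := mem_inter.1 hx
  by_contra hxw
  exact (mem_sdiff.1 (h.erase_subset (mem_erase.2 ⟨mt mem_singleton.2 hxw, hxf⟩))).2 hxab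

theorem card_degreeTwo_inter_reply_add_one_le :
    #(degreeTwo E ∩ f) + 1 ≤ #f + #(f ∩ (a ∪ b)) := by
  have hsub : degreeTwo E ∩ f ⊆ f.erase w ∪ f ∩ (a ∪ b) := by
    intro x hx
    obtain ⟨hx2, hxf⟩ := mem_inter.1 hx
    by_cases hxw : x = w
    · subst hxw
      obtain ⟨g, hgf, hg⟩ := exists_edgesAt_eq_pair_of_mem hx2 h.reply_mem hxf
      have hgx : g ∈ edgesAt E x := by simp [hg]
      have hgab : g = a ∨ g = b := by simpa [hgf] using h.edgesAt_subset hgx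
      have hxg := (mem_edgesAt.1 hgx).2
      refine mem_union_right _ (mem_inter.2 ⟨hxf, ?_⟩)
      rcases hgab with rfl | rfl
      · exact mem_union_left _ hxg
      · exact mem_union_right _ hxg
    · exact mem_union_left _ (mem_erase.2 ⟨hxw, hxf⟩)
  have hcard := (card_le_card hsub).trans (card_union_le _ _)
  rw [← card_erase_add_one h.mem_reply]
  lia

theorem card_inter_reply_add_card_inter_union_le (he : e ∈ crossEdges E a b f) :
    #(e ∩ f) + #(e ∩ (a ∪ b)) ≤ #e := by
  have hdisj : Disjoint (e ∩ f) (e ∩ (a ∪ b)) := by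
    rw [h.inter_reply_eq he]
    exact (disjoint_of_subset_left (inter_subset_left.trans h.erase_subset)
      sdiff_disjoint).mono_right inter_subset_right
  rw [← card_union_of_disjoint hdisj]
  exact card_le_card (union_subset inter_subset_left inter_subset_left)

theorem card_degreeTwo_inter_le (he : e ∈ crossEdges E a b f) :
    #(degreeTwo E ∩ e) ≤ #(e ∩ f) + #(e ∩ (a ∪ b)) := by
  have hsub : degreeTwo E ∩ e ⊆ e ∩ f ∪ e ∩ (a ∪ b) := by
    rw [← inter_union_distrib_left, union_comm f]
    exact subset_inter inter_subset_right (h.degreeTwo_inter_subset e he)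
  exact (card_le_card hsub).trans (card_union_le _ _)

theorem sum_card_inter_union_add_le (h2 : MaxDegreeLE E 2) :
    ∑ e ∈ crossEdges E a b f, #(e ∩ (a ∪ b)) + #(f ∩ (a ∪ b)) + #(a ∩ b) ≤
      #(degreeTwo E ∩ (a ∪ b)) := by
  have hf : f ∉ crossEdges E a b f := fun hf => (mem_crossEdges.1 hf).2.2.2.1 rfl
  have hsum := TransversalGame.sum_card_inter_union_add_le (F := insert f (crossEdges E a b f))
    h2 h.left_mem h.right_mem h.left_ne_right
    (insert_subset h.reply_mem (filter_subset _ _))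
    (by simp [mem_crossEdges, h.reply_ne_left.symm])
    (by simp [mem_crossEdges, h.reply_ne_right.symm])
  rwa [sum_insert hf, add_comm #(f ∩ (a ∪ b))] at hsum

theorem exists_loss_le_six (hE : (E : Set (Finset α)).Sized 4) (h2 : MaxDegreeLE E 2) :
    ∃ x ∈ degreeTwo E, loss E x ≤ 6 := by
  by_contra! hmin
  have hsum := h.sum_card_inter_reply
  rw [hE h.reply_mem] at hsum
  obtain ⟨e, he⟩ : (crossEdges E a b f).Nonempty := by
    by_contra! hempty
    simp [hempty] at hsum
  obtain ⟨heE, hea, heb, hef, hmeet⟩ := mem_crossEdges.1 he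
  have hpair : ∀ g ∈ E, e ≠ g → #(e ∩ g) ≤ 1 ∧ ((e ∩ g).Nonempty → 4 ≤ #(degreeTwo E ∩ e)) := by
    intro g hg heg
    have he4 : #(degreeTwo E ∩ e) ≤ 4 := hE heE ▸ card_le_card inter_subset_right
    have hg4 : #(degreeTwo E ∩ g) ≤ 4 := hE hg ▸ card_le_card inter_subset_right
    rcases (e ∩ g).eq_empty_or_nonempty with hempty | hne
    · simp [hempty]
    · have hle := add_card_inter_le_of_le_loss (k := 7) h2 hmin heE hg heg hne
      have hpos := card_pos.2 hne
      lia
  have hunion : #(e ∩ (a ∪ b)) ≤ #(e ∩ a) + #(e ∩ b) := by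
    rw [inter_union_distrib_left]
    exact card_union_le _ _
  have hlower := (hpair f h.reply_mem hef).2 hmeet
  have hupper := h.card_degreeTwo_inter_le he
  have ha := (hpair a h.left_mem hea).1
  have hb := (hpair b h.right_mem heb).1
  have hf := (hpair f h.reply_mem hef).1
  lia

theorem three_le_card_inter_union_add (hE : (E : Set (Finset α)).Sized 4) (h2 : MaxDegreeLE E 2)
    (hmin : ∀ x ∈ degreeTwo E, 6 ≤ loss E x) (he : e ∈ crossEdges E a b f) :
    3 ≤ #(e ∩ (a ∪ b)) + #(f ∩ (a ∪ b)) := by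
  obtain ⟨heE, -, -, hef, hmeet⟩ := mem_crossEdges.1 he
  have hle := add_card_inter_le_of_le_loss h2 hmin heE h.reply_mem hef hmeet
  have hf := h.card_degreeTwo_inter_reply_add_one_le
  have hupper := h.card_degreeTwo_inter_le he
  rw [hE h.reply_mem] at hf
  lia

theorem seven_le_card_degreeTwo_inter_union_of_crossEdge
    (hE : (E : Set (Finset α)).Sized 4) (h2 : MaxDegreeLE E 2)
    (hmin : ∀ x ∈ degreeTwo E, 6 ≤ loss E x) (he : e ∈ crossEdges E a b f)
    (he2 : 2 ≤ #(e ∩ (a ∪ b))) (he3 : #(degreeTwo E ∩ e) ≤ 3) (hab : #(a ∩ b) ≤ 1) :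
    7 ≤ #(degreeTwo E ∩ (a ∪ b)) := by
  obtain ⟨heE, hea, heb, -, -⟩ := mem_crossEdges.1 he
  have hmeet : ∀ g ∈ E, e ≠ g → #(degreeTwo E ∩ g) ≤ 4 ∧
      (#(e ∩ g) = 0 ∨ #(e ∩ g) + 3 ≤ #(degreeTwo E ∩ g)) := by
    intro g hg heg
    refine ⟨hE hg ▸ card_le_card inter_subset_right, ?_⟩
    rcases (e ∩ g).eq_empty_or_nonempty with hempty | hne
    · exact Or.inl (card_eq_zero.2 hempty)
    · have hle := add_card_inter_le_of_le_loss h2 hmin heE hg heg hne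
      exact Or.inr (by lia)
  have hunion : #(e ∩ (a ∪ b)) ≤ #(e ∩ a) + #(e ∩ b) := by
    rw [inter_union_distrib_left]
    exact card_union_le _ _
  have hsplit : #(degreeTwo E ∩ a) + #(degreeTwo E ∩ b) ≤
      #(degreeTwo E ∩ (a ∪ b)) + #(a ∩ b) := by
    rw [← card_union_add_card_inter, ← inter_union_distrib_left, ← inter_inter_distrib_left]
    exact Nat.add_le_add_left (card_le_card inter_subset_right) _
  have ha := hmeet a h.left_mem hea
  have hb := hmeet b h.right_mem heb
  lia

theorem card_crossEdges_eq_two (hE : (E : Set (Finset α)).Sized 4) (h2 : MaxDegreeLE E 2)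
    (hmin : ∀ x ∈ degreeTwo E, 6 ≤ loss E x) (hab : #(degreeTwo E ∩ (a ∪ b)) ≤ 6) :
    #(crossEdges E a b f) = 2 := by
  have hreply_le : #(f ∩ (a ∪ b)) ≤ 1 := by simpa using card_le_card h.reply_inter_union_subset
  have hinter := card_pos.2 h.inter_nonempty
  have hreply := h.sum_card_inter_reply
  have hpack := h.sum_card_inter_union_add_le h2
  have hlower := card_nsmul_le_sum _ _ _ fun e he => h.three_le_card_inter_union_add hE h2 hmin he
  have hupper := sum_le_card_nsmul _ _ 4 fun e he =>
    (h.card_inter_reply_add_card_inter_union_le he).trans_eq (hE (mem_crossEdges.1 he).1)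
  rw [hE h.reply_mem] at hreply
  rw [sum_add_distrib, sum_const, smul_eq_mul, smul_eq_mul] at hlower
  rw [sum_add_distrib, smul_eq_mul] at hupper
  interval_cases #(f ∩ (a ∪ b)) <;> lia

theorem seven_le_card_degreeTwo_inter_union (hE : (E : Set (Finset α)).Sized 4)
    (h2 : MaxDegreeLE E 2) (hmin : ∀ x ∈ degreeTwo E, 6 ≤ loss E x) :
    7 ≤ #(degreeTwo E ∩ (a ∪ b)) := by
  by_contra! hlt
  obtain ⟨g, g', hne, hcross⟩ :=
    card_eq_two.1 (h.card_crossEdges_eq_two hE h2 hmin (Nat.le_of_lt_succ hlt))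
  have hg : g ∈ crossEdges E a b f := by simp [hcross]
  have hg' : g' ∈ crossEdges E a b f := by simp [hcross]
  have hreply := h.sum_card_inter_reply
  have hpack := h.sum_card_inter_union_add_le h2
  rw [hE h.reply_mem, hcross, sum_pair hne] at hreply
  rw [hcross, sum_pair hne] at hpack
  have hreply_le : #(f ∩ (a ∪ b)) ≤ 1 := by simpa using card_le_card h.reply_inter_union_subset
  have hinter := card_pos.2 h.inter_nonempty
  have hthree := h.three_le_card_inter_union_add hE h2 hmin hg
  have hthree' := h.three_le_card_inter_union_add hE h2 hmin hg'
  have hab : #(a ∩ b) ≤ 1 := by lia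
  have hmeet : #(g ∩ (a ∪ b)) = 2 ∧ #(g' ∩ (a ∪ b)) = 2 := by lia
  obtain ⟨e, he, hef, heab⟩ :
      ∃ e ∈ crossEdges E a b f, #(e ∩ f) = 1 ∧ #(e ∩ (a ∪ b)) = 2 := by
    have hpos := card_pos.2 (mem_crossEdges.1 hg).2.2.2.2
    have hpos' := card_pos.2 (mem_crossEdges.1 hg').2.2.2.2
    obtain hone | hone : #(g ∩ f) = 1 ∨ #(g' ∩ f) = 1 := by lia
    exacts [⟨g, hg, hone, hmeet.1⟩, ⟨g', hg', hone, hmeet.2⟩]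
  have hthree_le := h.card_degreeTwo_inter_le he
  rw [hef, heab] at hthree_le
  exact hlt.not_ge (h.seven_le_card_degreeTwo_inter_union_of_crossEdge hE h2 hmin he heab.ge
    hthree_le hab)

end TightConfiguration

theorem erase_subset_degreeTwo (hv : edgesAt E v = {f}) (hloss : #f ≤ loss E v + 1) :
    f.erase v ⊆ degreeTwo E := by
  have hvf : v ∈ f := (mem_edgesAt.1 (hv ▸ mem_singleton_self f)).2
  have hcard : #(f.erase v) ≤ #(degreeTwo E ∩ f) := by
    rw [loss_of_edgesAt_eq_singleton hv] at hloss
    exact Nat.le_of_succ_le_succ ((card_erase_add_one hvf).trans_le hloss)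
  rw [← eq_of_subset_of_card_le (degreeTwo_inter_subset_erase hv) hcard]
  exact inter_subset_left

theorem subset_degreeTwo_of_forall_le_loss (hE : (E : Set (Finset α)).Sized r)
    (h2 : MaxDegreeLE E 2) (hmax : ∀ x ∈ degreeTwo E, 2 * r - 1 ≤ loss E x) (he : e ∈ E)
    (hne : (degreeTwo E ∩ e).Nonempty) : e ⊆ degreeTwo E := by
  obtain ⟨x, hx⟩ := hne
  obtain ⟨hx2, hxe⟩ := mem_inter.1 hx
  obtain ⟨f, hfe, hxstar⟩ := exists_edgesAt_eq_pair_of_mem hx2 he hxe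
  obtain ⟨hfE, hxf⟩ := mem_edgesAt.1 (hxstar ▸ mem_insert_of_mem (mem_singleton_self f))
  have hmeet : (e ∩ f).Nonempty := ⟨x, mem_inter.2 ⟨hxe, hxf⟩⟩
  have hle := add_card_inter_le_of_le_loss h2 hmax he hfE hfe.symm hmeet
  have hf : #(degreeTwo E ∩ f) ≤ r := hE hfE ▸ card_le_card inter_subset_right
  have hcard : #e ≤ #(degreeTwo E ∩ e) := by
    rw [hE he]
    have hpos := card_pos.2 hmeet
    lia
  exact inter_eq_right.1 (eq_of_subset_of_card_le inter_subset_right hcard)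

theorem edgesAt_subset_of_residual (hv : edgesAt E v = {a, b})
    (hw : edgesAt (residual E v) w = {f}) : edgesAt E w ⊆ {a, b, f} := by
  intro e he
  obtain ⟨heE, hwe⟩ := mem_edgesAt.1 he
  by_cases hve : v ∈ e
  · have : e ∈ edgesAt E v := mem_edgesAt.2 ⟨heE, hve⟩
    rw [hv] at this
    simp only [mem_insert, mem_singleton] at this ⊢
    tauto
  · have : e ∈ edgesAt (residual E v) w := mem_edgesAt.2 ⟨mem_residual.2 ⟨heE, hve⟩, hwe⟩
    rw [hw, mem_singleton] at this
    simp [this]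

theorem tightConfiguration_of_seven_le_loss (hE : (E : Set (Finset α)).Sized 4)
    (h2 : MaxDegreeLE E 2) (hab : a ≠ b) (hv : edgesAt E v = {a, b})
    (hw : edgesAt (residual E v) w = {f}) (hloss : 3 ≤ loss (residual E v) w)
    (hmax : ∀ x ∈ degreeTwo (residual (residual E v) w),
      7 ≤ loss (residual (residual E v) w) x) : TightConfiguration E a b f w := by
  obtain ⟨haE, hva⟩ := mem_edgesAt.1 (hv ▸ mem_insert_self a {b})
  obtain ⟨hbE, hvb⟩ := mem_edgesAt.1 (hv ▸ mem_insert_of_mem (mem_singleton_self b))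
  obtain ⟨hfE', hwf⟩ := mem_edgesAt.1 (hw ▸ mem_singleton_self f)
  obtain ⟨hfE, hvf⟩ := mem_residual.1 hfE'
  have h2' := h2.mono (residual_subset E v)
  have h2'' := h2'.mono (residual_subset _ w)
  have hE'' : (residual (residual E v) w : Set (Finset α)).Sized 4 :=
    hE.mono (coe_subset.2 ((residual_subset _ w).trans (residual_subset E v)))
  have hdouble : degreeTwo (residual E v) = degreeTwo E \ (a ∪ b) := by
    simp [degreeTwo_residual h2, hv]
  have hdouble' : degreeTwo (residual (residual E v) w) = (degreeTwo E \ (a ∪ b)) \ f := by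
    simp [degreeTwo_residual h2', hw, hdouble]
  have hstar := edgesAt_subset_of_residual hv hw
  refine ⟨haE, hbE, hfE, hab, ?_, ?_, ⟨v, mem_inter.2 ⟨hva, hvb⟩⟩, hwf, hstar, ?_, ?_⟩
  · exact (ne_of_mem_of_not_mem' hva hvf).symm
  · exact (ne_of_mem_of_not_mem' hvb hvf).symm
  · exact hdouble ▸ erase_subset_degreeTwo hw (by rw [hE hfE]; lia)
  · intro e he
    obtain ⟨heE, hea, heb, hef, y, hy⟩ := mem_crossEdges.1 he
    obtain ⟨hye, hyf⟩ := mem_inter.1 hy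
    have hve : v ∉ e := fun hve => by
      have : e ∈ edgesAt E v := mem_edgesAt.2 ⟨heE, hve⟩
      simp [hv, hea, heb] at this
    have hwe : w ∉ e := fun hwe => by
      simpa [hea, heb, hef] using hstar (mem_edgesAt.2 ⟨heE, hwe⟩)
    have hmem : e ∈ residual (residual E v) w := by simp [heE, hve, hwe]
    intro x hx
    obtain ⟨hx2, hxe⟩ := mem_inter.1 hx
    by_contra hxab
    have hx2' : x ∈ degreeTwo (residual (residual E v) w) := by
      rw [hdouble', sdiff_sdiff_left, sup_eq_union]
      exact mem_sdiff.2 ⟨hx2, hxab⟩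
    have hsub := subset_degreeTwo_of_forall_le_loss hE'' h2'' hmax hmem
      ⟨x, mem_inter.2 ⟨hx2', hxe⟩⟩
    exact (mem_sdiff.1 (hdouble' ▸ hsub hye)).2 hyf

theorem exists_loss_le_six_of_tight_reply (hE : (E : Set (Finset α)).Sized 4)
    (h2 : MaxDegreeLE E 2) (hv : v ∈ degreeTwo E)
    (hmin : ∀ x ∈ degreeTwo E, loss E v ≤ loss E x) (hsix : 6 ≤ loss E v)
    (hw : #(edgesAt (residual E v) w) = 1) (hthree : 3 ≤ loss (residual E v) w) :
    ∃ x ∈ degreeTwo (residual (residual E v) w), loss (residual (residual E v) w) x ≤ 6 := by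
  by_contra! hmax
  obtain ⟨a, b, hab, hstar⟩ := card_eq_two.1 (mem_degreeTwo.1 hv)
  obtain ⟨f, hf⟩ := card_eq_one.1 hw
  have htight := tightConfiguration_of_seven_le_loss hE h2 hab hstar hf hthree hmax
  have hseven : 7 ≤ loss E v := loss_of_edgesAt_eq_pair hstar ▸
    htight.seven_le_card_degreeTwo_inter_union hE h2 fun x hx => hsix.trans (hmin x hx)
  obtain ⟨x, hx, hx6⟩ := htight.exists_loss_le_six hE h2
  exact (hseven.trans (hmin x hx)).not_gt (Nat.lt_succ_of_le hx6)

end Hypergraph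

/-! ### The transversal game -/

section Game

variable {E : Finset (Finset V)} {v : V}

theorem playable_eq_biUnion (E : Finset (Finset V)) : playable E = E.biUnion id := by
  ext v
  simp [playable]

theorem gameVal_eq_zero_or_exists (ehTurn : Bool) (E : Finset (Finset V)) :
    gameVal ehTurn E = 0 ∨
      ∃ v ∈ E.biUnion id, gameVal ehTurn E = 1 + gameVal (!ehTurn) (residual E v) := by
  rw [gameVal, ← playable_eq_biUnion]
  split_ifs with hne hturn
  · obtain ⟨v, -, hv⟩ := exists_mem_eq_inf' (attach_nonempty_iff.2 hne)
      fun v => gameVal (!ehTurn) {e ∈ E | v.1 ∉ e}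
    exact Or.inr ⟨v, v.2, by rw [hv, residual]⟩
  · obtain ⟨v, -, hv⟩ := exists_mem_eq_sup' (attach_nonempty_iff.2 hne)
      fun v => gameVal (!ehTurn) {e ∈ E | v.1 ∉ e}
    exact Or.inr ⟨v, v.2, by rw [hv, residual]⟩
  · exact Or.inl rfl

theorem gameVal_true_le (hv : v ∈ E.biUnion id) :
    gameVal true E ≤ 1 + gameVal false (residual E v) := by
  rw [← playable_eq_biUnion] at hv
  rw [gameVal, dif_pos ⟨v, hv⟩]
  simp only [if_true, Bool.not_true]
  have hle := inf'_le (fun x : {x // x ∈ playable E} => gameVal false {e ∈ E | x.1 ∉ e})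
    (mem_attach _ ⟨v, hv⟩)
  exact Nat.add_le_add_left hle 1

theorem gameVal_true_le_one_or_exists_reply (hv : v ∈ E.biUnion id) :
    gameVal true E ≤ 1 ∨ ∃ w ∈ (residual E v).biUnion id,
      gameVal true E ≤ 2 + gameVal true (residual (residual E v) w) := by
  have hle := gameVal_true_le hv
  rcases gameVal_eq_zero_or_exists false (residual E v) with hzero | ⟨w, hw, hreply⟩
  · exact Or.inl (by lia)
  · exact Or.inr ⟨w, hw, by rw [Bool.not_false] at hreply; lia⟩

theorem gameVal_le_card (ehTurn : Bool) (E : Finset (Finset V)) : gameVal ehTurn E ≤ #E := by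
  induction E using Finset.strongInduction generalizing ehTurn with
  | H E ih =>
    rcases gameVal_eq_zero_or_exists ehTurn E with hzero | ⟨v, hv, hmove⟩
    · lia
    · have hssub := residual_ssubset hv
      have hle := ih _ hssub (!ehTurn)
      have hlt := card_lt_card hssub
      lia

theorem mul_gameVal_le_of_forall_maxDegreeLE {K a b k : ℕ} (hK : 2 * K ≤ 2 * a + (k + 2) * b)
    (E : Finset (Finset V))
    (hbase : ∀ F ⊆ E, MaxDegreeLE F k → K * gameVal true F ≤ a * #(F.biUnion id) + b * #F) :
    K * gameVal true E ≤ a * #(E.biUnion id) + b * #E := by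
  induction E using Finset.strongInduction with
  | H E ih =>
    by_cases hk : MaxDegreeLE E k
    · exact hbase E Subset.rfl hk
    obtain ⟨v, hv⟩ : ∃ v, k < #(edgesAt E v) := by simpa [MaxDegreeLE] using hk
    have hvE := edgesAt_nonempty.1 (card_pos.1 (Nat.zero_lt_of_lt hv))
    have hedges := card_residual_add_card_edgesAt E v
    have hverts := card_lt_card (biUnion_residual_ssubset hvE)
    rcases gameVal_true_le_one_or_exists_reply hvE with hone | ⟨w, hw, hround⟩
    · calc K * gameVal true E ≤ K * 1 := by gcongr
        _ ≤ a * 1 + b * (k + 1) := by lia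
        _ ≤ a * #(E.biUnion id) + b * #E := by gcongr <;> lia
    · have hssub := (residual_ssubset hw).trans (residual_ssubset hvE)
      have hrest := ih _ hssub fun F hF => hbase F (hF.trans hssub.subset)
      have hedges' := card_lt_card (residual_ssubset hw)
      have hverts' := card_lt_card (biUnion_residual_ssubset hw)
      set E'' := residual (residual E v) w
      calc K * gameVal true E ≤ K * (2 + gameVal true E'') := by gcongr
        _ ≤ a * (#(E''.biUnion id) + 2) + b * (#E'' + (k + 2)) := by lia
        _ ≤ a * #(E.biUnion id) + b * #E := by gcongr <;> lia

theorem gameVal_add_card_degreeTwo_le_of_forall_loss_le (hE : (E : Set (Finset V)).Sized 4)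
    (h2 : MaxDegreeLE E 2) (hv : v ∈ degreeTwo E)
    (hmin : ∀ x ∈ degreeTwo E, loss E v ≤ loss E x)
    (ih : ∀ F ⊂ E, 9 * gameVal true F + #(degreeTwo F) ≤ 9 * #F ∧
      ((∃ x ∈ degreeTwo F, loss F x ≤ 6) → 9 * gameVal true F + #(degreeTwo F) + 1 ≤ 9 * #F)) :
    9 * gameVal true E + #(degreeTwo E) ≤ 9 * #E ∧
      (loss E v ≤ 6 → 9 * gameVal true E + #(degreeTwo E) + 1 ≤ 9 * #E) := by
  have hvE : v ∈ E.biUnion id := (mem_filter.1 hv).1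
  have hE' : (residual E v : Set (Finset V)).Sized 4 :=
    hE.mono (coe_subset.2 (residual_subset E v))
  have h2' := h2.mono (residual_subset E v)
  have hdegree := mem_degreeTwo.1 hv
  have hloss := loss_add_one_le_of_degree_two hE hdegree
  have hedges := card_residual_add_card_edgesAt E v
  have hdouble := card_degreeTwo_residual_add_loss h2 v
  rcases gameVal_true_le_one_or_exists_reply hvE with hone | ⟨w, hw, hround⟩
  · have hrest := (ih _ (residual_ssubset hvE)).1
    lia
  have hrest := ih _ ((residual_ssubset hw).trans (residual_ssubset hvE))
  have hedges' := card_residual_add_card_edgesAt (residual E v) w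
  have hdouble' := card_degreeTwo_residual_add_loss h2' w
  have hpos : 0 < #(edgesAt (residual E v) w) := card_pos.2 (edgesAt_nonempty.2 hw)
  obtain hdegree' | hdegree' :
      #(edgesAt (residual E v) w) = 2 ∨ #(edgesAt (residual E v) w) = 1 := by
    have := h2' w
    lia
  · have hloss' := loss_add_one_le_of_degree_two hE' hdegree'
    lia
  have hloss' := loss_add_one_le_of_degree_one hE' hdegree'
  by_cases htight : 6 ≤ loss E v ∧ 3 ≤ loss (residual E v) w
  · have hgain := hrest.2
      (exists_loss_le_six_of_tight_reply hE h2 hv hmin htight.1 hdegree' htight.2)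
    lia
  · lia

theorem gameVal_add_card_degreeTwo_le (hE : (E : Set (Finset V)).Sized 4)
    (h2 : MaxDegreeLE E 2) :
    9 * gameVal true E + #(degreeTwo E) ≤ 9 * #E ∧
      ((∃ x ∈ degreeTwo E, loss E x ≤ 6) → 9 * gameVal true E + #(degreeTwo E) + 1 ≤ 9 * #E) := by
  induction E using Finset.strongInduction with
  | H E ih =>
    rcases (degreeTwo E).eq_empty_or_nonempty with hempty | hne
    · have hcard := gameVal_le_card true E
      simp only [hempty, card_empty, notMem_empty, false_and, exists_false, false_imp_iff, and_true]
      lia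
    obtain ⟨v, hv, hmin⟩ := exists_min_image (degreeTwo E) (loss E) hne
    have hv_bound := gameVal_add_card_degreeTwo_le_of_forall_loss_le hE h2 hv hmin
      fun F hF => ih F hF (hE.mono (coe_subset.2 hF.subset)) (h2.mono hF.subset)
    exact ⟨hv_bound.1, fun ⟨x, hx, hx6⟩ => hv_bound.2 ((hmin x hx).trans hx6)⟩

theorem twentySeven_mul_gameVal_le_of_maxDegreeLE_two (hE : (E : Set (Finset V)).Sized 4)
    (h2 : MaxDegreeLE E 2) : 27 * gameVal true E ≤ 5 * #(E.biUnion id) + 11 * #E := by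
  have hgame := (gameVal_add_card_degreeTwo_le hE h2).1
  have hsum := mul_card_le_add_card_degreeTwo hE h2
  have hdouble : #(degreeTwo E) ≤ #(E.biUnion id) := card_filter_le _ _
  lia

theorem twentySeven_mul_gameVal_le (hE : (E : Set (Finset V)).Sized 4) :
    27 * gameVal true E ≤ 5 * #(E.biUnion id) + 11 * #E :=
  mul_gameVal_le_of_forall_maxDegreeLE (k := 2) (by norm_num) E fun _ hF h2 =>
    twentySeven_mul_gameVal_le_of_maxDegreeLE_two (hE.mono (coe_subset.2 hF)) h2

theorem sevenHundredFiftySix_mul_gameVal_le (hE : (E : Set (Finset V)).Sized 4) :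
    756 * gameVal true E ≤ 206 * #(E.biUnion id) + 220 * #E :=
  mul_gameVal_le_of_forall_maxDegreeLE (k := 3) (by norm_num) E fun F hF h3 => by
    have hF4 : (F : Set (Finset V)).Sized 4 := hE.mono (coe_subset.2 hF)
    have hgame := twentySeven_mul_gameVal_le hF4
    have hcard := mul_card_le_of_maxDegreeLE hF4 h3
    lia

theorem twoHundredFiftyTwo_mul_gameVal_le (hE : (E : Set (Finset V)).Sized 4) :
    252 * gameVal true E ≤ 71 * #(E.biUnion id) + 71 * #E :=
  mul_gameVal_le_of_forall_maxDegreeLE (k := 4) (by norm_num) E fun F hF h4 => by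
    have hF4 : (F : Set (Finset V)).Sized 4 := hE.mono (coe_subset.2 hF)
    have hgame := sevenHundredFiftySix_mul_gameVal_le hF4
    have hcard := mul_card_le_of_maxDegreeLE hF4 h4
    lia

theorem mul_stallerGameTransversalNum_le (hE : (E : Set (Finset V)).Sized 4) :
    252 * stallerGameTransversalNum E ≤ 71 * #(E.biUnion id) + 71 * #E + 110 := by
  unfold stallerGameTransversalNum
  rcases gameVal_eq_zero_or_exists false E with hzero | ⟨v, hv, hmove⟩
  · lia
  rw [Bool.not_false] at hmove
  have hgame := twoHundredFiftyTwo_mul_gameVal_le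
    (hE.mono (coe_subset.2 (residual_subset E v)))
  have hverts := card_lt_card (biUnion_residual_ssubset hv)
  have hedges := card_lt_card (residual_ssubset hv)
  lia

end Game

end TransversalGame

/-- If `H` is a `4`-uniform hypergraph, then
`τ_g'(H) ≤ (1/252)(71 n(H) + 71 m(H) + 110)`. -/
theorem stallerGameTransversalNum_le_of_four_uniform
    {V : Type} [Fintype V] [DecidableEq V] (E : Finset (Finset V))
    (h4 : ∀ e ∈ E, e.card = 4) :
    (stallerGameTransversalNum E : ℚ) ≤
      (1 / 252) * (71 * Fintype.card V + 71 * E.card + 110) := by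
  have hgame := TransversalGame.mul_stallerGameTransversalNum_le (E := E) fun e he => h4 e he
  have hverts : (E.biUnion id).card ≤ Fintype.card V := Finset.card_le_univ _
  have hnat : 252 * stallerGameTransversalNum E ≤ 71 * Fintype.card V + 71 * E.card + 110 := by
    lia
  have hrat : (252 : ℚ) * stallerGameTransversalNum E ≤
      71 * Fintype.card V + 71 * E.card + 110 := by exact_mod_cast hnat
  linarith
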